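/- Let G be an abelian group of finite Prüfer rank and let (φ,ψ) be a tame pair of endomorphisms of G. Let T ≤ G be the torsion subgroup, let φ̃, ψ̃ : G/T → G/T be the induced endomorphisms and φ₀, ψ₀ : T → T the restrictions. Then the pairs (φ̃,ψ̃) and (φ₀,ψ₀) are tame, and for every n ≥ 1, R(φⁿ,ψⁿ) = R(φ̃ⁿ,ψ̃ⁿ) · R(φ₀ⁿ,ψ₀ⁿ). -/

import Mathlib

/-!
In an abelian group `A` the `(φ,ψ)`-twisted classes are the cosets of the image of
`δ = ψ / φ`, so `R(φ,ψ) = [A : im δ]`.  Fix `n` and let `δ` be the difference of `ψⁿ` and `φⁿ`.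

Finite Prüfer rank bounds the rank of `G` as a `ℤ`-module.  If `im δ` has finite index, then
`im δ` and `G` have the same finite rank, and rank-nullity makes `ker δ` a torsion group
(`ker_le_torsion`).  Hence `δ g ∈ T` forces `g ∈ T`, that is, `im δ ∩ T = δ(T)`.  The formula is
then the multiplicativity of the index along `im δ ≤ im δ · T ≤ G` (`index_eq_mul`): the upper
index is that of the image of the induced map on `G/T`, while
`[im δ · T : im δ] = [T : im δ ∩ T] = [T : δ(T)]`.  No compatibility between different `n` is
involved, so `φ` and `ψ` need not commute.
-/

/-- Elements `x, y` of a group `G` are `(φ,ψ)`-twisted conjugate if there is `g : G`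
with `x = (φ g)⁻¹ * y * (ψ g)`. -/
def TwistedConj {G : Type*} [Group G] (φ ψ : G → G) (x y : G) : Prop :=
  ∃ g : G, x = (φ g)⁻¹ * y * ψ g

/-- A group has finite Prüfer rank if there is `r` such that every finitely
generated subgroup can be generated by at most `r` elements. -/
def HasFinitePrueferRank (G : Type*) [Group G] : Prop :=
  ∃ r : ℕ, ∀ H : Subgroup G, H.FG →
    ∃ S : Finset G, S.card ≤ r ∧ Subgroup.closure (S : Set G) = H

/-- The homomorphism `g ↦ ψ g / φ g`. -/
def diffHom {A : Type*} [CommGroup A] (φ ψ : Monoid.End A) : A →* A :=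
  (show A →* A from ψ) / (show A →* A from φ)

theorem diffHom_apply {A : Type*} [CommGroup A] (φ ψ : Monoid.End A) (g : A) :
    diffHom φ ψ g = ψ g / φ g := rfl

theorem twistedConj_iff {A : Type*} [CommGroup A] (φ ψ : Monoid.End A) (x y : A) :
    TwistedConj ⇑φ ⇑ψ x y ↔ y⁻¹ * x ∈ (diffHom φ ψ).range := by
  constructor
  · rintro ⟨g, rfl⟩
    refine ⟨g, ?_⟩
    rw [diffHom_apply, div_eq_mul_inv, mul_comm (φ g)⁻¹ y, mul_assoc, inv_mul_cancel_left,
      mul_comm]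
  · rintro ⟨g, hg⟩
    refine ⟨g, ?_⟩
    rw [diffHom_apply] at hg
    rw [mul_comm (φ g)⁻¹ y, mul_assoc, mul_comm (φ g)⁻¹, ← div_eq_mul_inv, hg,
      mul_inv_cancel_left]

/-- Twisted conjugacy classes are the cosets of the image of `diffHom φ ψ`. -/
def quotEquiv {A : Type*} [CommGroup A] (φ ψ : Monoid.End A) :
    Quot (TwistedConj ⇑φ ⇑ψ) ≃ A ⧸ (diffHom φ ψ).range where
  toFun := Quot.lift (fun x => (x : A ⧸ (diffHom φ ψ).range)) fun x y h =>
    (QuotientGroup.eq.2 ((twistedConj_iff φ ψ x y).1 h)).symm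
  invFun := Quotient.lift (fun x => Quot.mk _ x) fun x y h => by
    refine (Quot.sound ((twistedConj_iff φ ψ y x).2 ?_)).symm
    exact QuotientGroup.leftRel_apply.1 h
  left_inv := by rintro ⟨x⟩; rfl
  right_inv := by rintro ⟨x⟩; rfl

theorem card_quot {A : Type*} [CommGroup A] (φ ψ : Monoid.End A) :
    Nat.card (Quot (TwistedConj ⇑φ ⇑ψ)) = (diffHom φ ψ).range.index :=
  Nat.card_congr (quotEquiv φ ψ)

theorem finite_quot_iff {A : Type*} [CommGroup A] (φ ψ : Monoid.End A) :
    Finite (Quot (TwistedConj ⇑φ ⇑ψ)) ↔ (diffHom φ ψ).range.index ≠ 0 := by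
  rw [(quotEquiv φ ψ).finite_iff, Subgroup.index_ne_zero_iff_finite]

/-- Finite Prüfer rank implies finite torsion-free rank: a linearly independent finite set
generates a free abelian group, which needs that many generators. -/
theorem rank_lt_aleph0 {G : Type*} [CommGroup G] (h : HasFinitePrueferRank G) :
    Module.rank ℤ (Additive G) < Cardinal.aleph0 := by
  classical
  obtain ⟨r, hr⟩ := h
  refine lt_of_le_of_lt (b := (r : Cardinal)) (rank_le fun s hs => ?_)
    (Cardinal.natCast_lt_aleph0)
  obtain ⟨S, hS, hSs⟩ := hr (Subgroup.closure (Additive.ofMul ⁻¹' (s : Set (Additive G))))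
    ⟨s.map Additive.toMul.toEmbedding, by
      congr 1; ext x; simp⟩
  have hspan : Submodule.span ℤ (s : Set (Additive G)) ≤
      Submodule.span ℤ ((S.map Additive.ofMul.toEmbedding : Finset (Additive G)) :
        Set (Additive G)) := by
    rw [Submodule.span_le]
    intro x hx
    suffices H : ∀ y ∈ Subgroup.closure (S : Set G), Additive.ofMul y ∈
        Submodule.span ℤ ((S.map Additive.ofMul.toEmbedding : Finset (Additive G)) :
          Set (Additive G)) from
      H (Additive.toMul x) (by rw [hSs]; exact Subgroup.subset_closure hx)
    intro y hy
    induction hy using Subgroup.closure_induction with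
    | mem y hy => exact Submodule.subset_span (by simpa using hy)
    | one => exact Submodule.zero_mem _
    | mul y z _ _ hy hz => exact Submodule.add_mem _ hy hz
    | inv y _ hy => exact Submodule.neg_mem _ hy
  have h1 := finrank_span_finset_eq_card hs
  have h2 := Submodule.finrank_mono hspan
  have h3 := finrank_span_finset_le_card (R := ℤ) (S.map Additive.ofMul.toEmbedding)
  rw [Finset.card_map] at h3
  rw [Set.finrank] at h3
  omega

/-- An endomorphism of an abelian group of finite rank whose image has finite index has torsion
kernel. -/
theorem ker_le_torsion {G : Type*} [CommGroup G] (h : HasFinitePrueferRank G) (δ : G →* G)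
    (hδ : δ.range.index ≠ 0) : δ.ker ≤ CommGroup.torsion G := by
  have hfin := rank_lt_aleph0 h
  let f : Additive G →ₗ[ℤ] Additive G := (MonoidHom.toAdditive δ).toIntLinearMap
  -- The cokernel is annihilated by the index, hence has rank zero.
  have hq : Module.rank ℤ (Additive G ⧸ LinearMap.range f) = 0 := by
    rw [rank_eq_zero_iff]
    intro x
    obtain ⟨x, rfl⟩ := Submodule.Quotient.mk_surjective _ x
    refine ⟨δ.range.index, by exact_mod_cast hδ, ?_⟩
    rw [← Submodule.Quotient.mk_smul, Submodule.Quotient.mk_eq_zero]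
    obtain ⟨y, hy⟩ := Subgroup.pow_index_mem δ.range (Additive.toMul x)
    exact ⟨Additive.ofMul y, by rw [natCast_zsmul]; exact congrArg Additive.ofMul hy⟩
  have h1 := rank_quotient_add_rank_of_isDomain (LinearMap.range f)
  have h2 := rank_quotient_add_rank_of_isDomain (LinearMap.ker f)
  rw [hq, zero_add] at h1
  rw [f.quotKerEquivRange.rank_eq, h1] at h2
  have hker : Module.rank ℤ (LinearMap.ker f) = 0 :=
    Cardinal.eq_of_add_eq_add_left (a := Module.rank ℤ (Additive G)) (by rw [h2, add_zero]) hfin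
  intro g hg
  rw [rank_eq_zero_iff] at hker
  have hg' : δ g = 1 := hg
  obtain ⟨a, ha, hag⟩ := hker ⟨Additive.ofMul g, congrArg Additive.ofMul hg'⟩
  have hg1 : g ^ a = 1 := congrArg (fun z : LinearMap.ker f => Additive.toMul z.1) hag
  exact isOfFinOrder_iff_zpow_eq_one.2 ⟨a, ha, hg1⟩

/-- The index identity for a single pair of endomorphisms. -/
theorem index_eq_mul {G : Type*} [CommGroup G] (h : HasFinitePrueferRank G) (δ : G →* G)
    (hδ : δ.range.index ≠ 0)
    (δt : G ⧸ CommGroup.torsion G →* G ⧸ CommGroup.torsion G)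
    (hδt : ∀ g : G, δt (g : G ⧸ CommGroup.torsion G) = (δ g : G))
    (δ₀ : CommGroup.torsion G →* CommGroup.torsion G)
    (hδ₀ : ∀ t, (δ₀ t : G) = δ t) :
    δ.range.index = δt.range.index * δ₀.range.index := by
  have e1 : δt.range.index = (δ.range ⊔ CommGroup.torsion G).index := by
    rw [← Subgroup.index_comap_of_surjective δt.range
      (QuotientGroup.mk'_surjective (CommGroup.torsion G))]
    have hm : δt.range = δ.range.map (QuotientGroup.mk' (CommGroup.torsion G)) := by
      ext x
      constructor
      · rintro ⟨y, rfl⟩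
        obtain ⟨y, rfl⟩ := QuotientGroup.mk_surjective y
        exact ⟨δ y, ⟨y, rfl⟩, (hδt y).symm⟩
      · rintro ⟨_, ⟨y, rfl⟩, rfl⟩
        exact ⟨y, hδt y⟩
    rw [hm, Subgroup.comap_map_eq, QuotientGroup.ker_mk']
  have e2 : δ₀.range = δ.range.subgroupOf (CommGroup.torsion G) := by
    ext t
    rw [Subgroup.mem_subgroupOf]
    constructor
    · rintro ⟨s, rfl⟩
      exact ⟨s, (hδ₀ s).symm⟩
    · rintro ⟨g, hg⟩
      -- If `δ g` is torsion, some positive power of `g` lies in `ker δ`, a torsion group.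
      have hgT : g ∈ CommGroup.torsion G := by
        obtain ⟨k, hk, hk1⟩ := isOfFinOrder_iff_pow_eq_one.1 t.2
        have hkt : g ^ k ∈ CommGroup.torsion G := ker_le_torsion h δ hδ
          (by rw [MonoidHom.mem_ker, map_pow, hg, hk1])
        obtain ⟨m, hm, hm1⟩ := isOfFinOrder_iff_pow_eq_one.1 hkt
        exact isOfFinOrder_iff_pow_eq_one.2 ⟨k * m, Nat.mul_pos hk hm, by rw [pow_mul, hm1]⟩
      exact ⟨⟨g, hgT⟩, Subtype.ext ((hδ₀ _).trans hg)⟩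
  have e3 := Subgroup.relIndex_mul_index (le_sup_left : δ.range ≤ δ.range ⊔ CommGroup.torsion G)
  rw [sup_comm, Subgroup.relIndex_sup_right, sup_comm] at e3
  rw [e1, e2, ← e3, mul_comm]
  rfl

/-- Let `G` be an abelian group of finite Prüfer rank and
`(φ,ψ)` a tame pair of endomorphisms.  With `T` the torsion subgroup, `φ̃, ψ̃`
the induced endomorphisms of `G/T` and `φ₀, ψ₀` the restrictions to `T`, the
pairs `(φ̃,ψ̃)` and `(φ₀,ψ₀)` are tame and
`R(φⁿ,ψⁿ) = R(φ̃ⁿ,ψ̃ⁿ) · R(φ₀ⁿ,ψ₀ⁿ)` for every `n ≥ 1`. -/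
theorem statement11 {G : Type*} [CommGroup G]
    (hrank : HasFinitePrueferRank G)
    (φ ψ : Monoid.End G)
    (htame : ∀ n : ℕ, 1 ≤ n → Finite (Quot (TwistedConj ⇑(φ ^ n) ⇑(ψ ^ n))))
    (φt ψt : Monoid.End (G ⧸ CommGroup.torsion G))
    (hφt : ∀ g : G, φt ((g : G ⧸ CommGroup.torsion G)) = ((φ g : G) : G ⧸ CommGroup.torsion G))
    (hψt : ∀ g : G, ψt ((g : G ⧸ CommGroup.torsion G)) = ((ψ g : G) : G ⧸ CommGroup.torsion G))
    (φ₀ ψ₀ : Monoid.End (CommGroup.torsion G))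
    (hφ₀ : ∀ t : CommGroup.torsion G, (φ₀ t : G) = φ (t : G))
    (hψ₀ : ∀ t : CommGroup.torsion G, (ψ₀ t : G) = ψ (t : G)) :
    (∀ n : ℕ, 1 ≤ n → Finite (Quot (TwistedConj ⇑(φt ^ n) ⇑(ψt ^ n)))) ∧
    (∀ n : ℕ, 1 ≤ n → Finite (Quot (TwistedConj ⇑(φ₀ ^ n) ⇑(ψ₀ ^ n)))) ∧
    (∀ n : ℕ, 1 ≤ n →
      Nat.card (Quot (TwistedConj ⇑(φ ^ n) ⇑(ψ ^ n))) =
        Nat.card (Quot (TwistedConj ⇑(φt ^ n) ⇑(ψt ^ n))) *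
          Nat.card (Quot (TwistedConj ⇑(φ₀ ^ n) ⇑(ψ₀ ^ n)))) := by
  have ht : ∀ n : ℕ, ∀ g : G, (φt ^ n) (g : G ⧸ CommGroup.torsion G) = ((φ ^ n) g : G) ∧
      (ψt ^ n) (g : G ⧸ CommGroup.torsion G) = ((ψ ^ n) g : G) := by
    intro n
    induction n with
    | zero => exact fun g => ⟨rfl, rfl⟩
    | succ n ih =>
      intro g
      simp only [pow_succ, Monoid.End.coe_mul, Function.comp_apply, hφt, hψt]
      exact ⟨(ih _).1, (ih _).2⟩
  have h0 : ∀ n : ℕ, ∀ t : CommGroup.torsion G, ((φ₀ ^ n) t : G) = (φ ^ n) t ∧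
      ((ψ₀ ^ n) t : G) = (ψ ^ n) t := by
    intro n
    induction n with
    | zero => exact fun g => ⟨rfl, rfl⟩
    | succ n ih =>
      intro t
      simp only [pow_succ, Monoid.End.coe_mul, Function.comp_apply, ← hφ₀, ← hψ₀]
      exact ⟨(ih _).1, (ih _).2⟩
  have key : ∀ n : ℕ, 1 ≤ n → (diffHom (φ ^ n) (ψ ^ n)).range.index =
      (diffHom (φt ^ n) (ψt ^ n)).range.index * (diffHom (φ₀ ^ n) (ψ₀ ^ n)).range.index := by
    intro n hn
    refine index_eq_mul hrank _ ((finite_quot_iff _ _).1 (htame n hn)) _ (fun g => ?_) _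
      (fun t => ?_)
    · rw [diffHom_apply, diffHom_apply, (ht n g).1, (ht n g).2, QuotientGroup.mk_div]
    · rw [diffHom_apply, diffHom_apply, Subgroup.coe_div, (h0 n t).1, (h0 n t).2]
  have hne : ∀ n : ℕ, 1 ≤ n → (diffHom (φt ^ n) (ψt ^ n)).range.index ≠ 0 ∧
      (diffHom (φ₀ ^ n) (ψ₀ ^ n)).range.index ≠ 0 := fun n hn =>
    mul_ne_zero_iff.1 (key n hn ▸ (finite_quot_iff _ _).1 (htame n hn))
  refine ⟨fun n hn => (finite_quot_iff _ _).2 (hne n hn).1,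
    fun n hn => (finite_quot_iff _ _).2 (hne n hn).2, fun n hn => ?_⟩
  rw [card_quot, card_quot, card_quot, key n hn]
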